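/- Let M be a reduced G-perfect R-module of G-dimension n and let N be an R-module of finite flat dimension or finite injective dimension. Then: (i) Tor^R_i(Ext^n_R(M,R), N) ≅ Ext^{n−i}_R(M,N) for 0 ≤ i < n, and Tor^R_i(Ext^n_R(M,R), N) ≅ Tor^R_{i−n}(λM, N) for i > n; (ii) Ext^i_R(Ext^n_R(M,R), N) ≅ Tor^R_{n−i}(M,N) for 0 ≤ i < n, and Ext^i_R(Ext^n_R(M,R), N) ≅ Ext^{i−n}_R(λM, N) for i > n. -/

import Mathlib

open CategoryTheory

noncomputable section

universe u

/-- The `i`-th Ext group `Ext^i_R(M,N)`, as a type (with its `R`-module structure). -/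
abbrev extM (R : Type u) [CommRing R] (i : ℕ) (M N : Type u) [AddCommGroup M] [Module R M]
    [AddCommGroup N] [Module R N] : Type u :=
  ((Ext R (ModuleCat.{u} R) i).obj (Opposite.op (ModuleCat.of R M))).obj (ModuleCat.of R N)

/-- The `i`-th Tor group `Tor^R_i(M,N)`, as a type. -/
abbrev torM (R : Type u) [CommRing R] (i : ℕ) (M N : Type u) [AddCommGroup M] [Module R M]
    [AddCommGroup N] [Module R N] : Type u :=
  ((Tor (ModuleCat.{u} R) i).obj (ModuleCat.of R M)).obj (ModuleCat.of R N)

/-- The `i`-th local cohomology `H^i_I(M)`, as a type. -/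
abbrev locCoh (R : Type u) [CommRing R] (I : Ideal R) (i : ℕ) (M : Type u) [AddCommGroup M]
    [Module R M] : Type u :=
  (localCohomology I i).obj (ModuleCat.of R M)

/-- A submodule `N ≤ M` is superfluous if `K ⊔ N = ⊤` implies `K = ⊤`. -/
def Submodule.IsSuperfluous {R M : Type u} [CommRing R] [AddCommGroup M] [Module R M]
    (N : Submodule R M) : Prop :=
  ∀ K : Submodule R M, K ⊔ N = ⊤ → K = ⊤

/-- A minimal projective resolution of `M` by finitely generated projective modules:
each `P i → Ω^i M` is a projective cover (i.e. has superfluous kernel). -/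
structure MinRes (R : Type u) [CommRing R] (M : Type u) [AddCommGroup M] [Module R M] where
  P : ℕ → ModuleCat.{u} R
  projective : ∀ i, Module.Projective R (P i)
  finite : ∀ i, Module.Finite R (P i)
  d : (i : ℕ) → (↥(P (i + 1)) →ₗ[R] ↥(P i))
  ε : ↥(P 0) →ₗ[R] M
  surj : Function.Surjective ε
  exact0 : LinearMap.range (d 0) = LinearMap.ker ε
  exact : ∀ i, LinearMap.range (d (i + 1)) = LinearMap.ker (d i)
  min_eps : (LinearMap.ker ε).IsSuperfluous
  min_d : ∀ i, (LinearMap.ker (d i)).IsSuperfluous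

namespace MinRes

variable {R M : Type u} [CommRing R] [AddCommGroup M] [Module R M]

/-- `T k F` is the Auslander-Bridger transpose `𝒯_{k+1} M = Tr Ω^k M`, computed as the
cokernel of `P_k* → P_{k+1}*`. -/
def T (F : MinRes R M) (k : ℕ) : Type u :=
  (Module.Dual R ↥(F.P (k + 1))) ⧸ LinearMap.range (F.d k).dualMap

instance (F : MinRes R M) (k : ℕ) : AddCommGroup (F.T k) :=
  inferInstanceAs (AddCommGroup ((Module.Dual R ↥(F.P (k + 1))) ⧸
    LinearMap.range (F.d k).dualMap))

instance (F : MinRes R M) (k : ℕ) : Module R (F.T k) :=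
  inferInstanceAs (Module R ((Module.Dual R ↥(F.P (k + 1))) ⧸
    LinearMap.range (F.d k).dualMap))

/-- The transpose `Tr M = coker(P₀* → P₁*)` computed from a minimal projective presentation. -/
abbrev Tr (F : MinRes R M) : Type u := F.T 0

/-- `λM = ΩTr M`, realized as the image of `P₀* → P₁*` for a minimal projective
presentation `P₁ → P₀ → M → 0`. -/
def lambdaMod (F : MinRes R M) : Type u :=
  ↥(LinearMap.range (F.d 0).dualMap)

instance (F : MinRes R M) : AddCommGroup F.lambdaMod :=
  inferInstanceAs (AddCommGroup ↥(LinearMap.range (F.d 0).dualMap))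

instance (F : MinRes R M) : Module R F.lambdaMod :=
  inferInstanceAs (Module R ↥(LinearMap.range (F.d 0).dualMap))

end MinRes

/-- `M` is a horizontally linked `R`-module, i.e. `M ≅ λλM`. -/
def IsHorizontallyLinked (R : Type u) [CommRing R] (M : Type u) [AddCommGroup M]
    [Module R M] : Prop :=
  ∃ (F : MinRes R M) (G : MinRes R F.lambdaMod), Nonempty (G.lambdaMod ≃ₗ[R] M)

/-- `M` and `N` are horizontally linked to each other: `M ≅ λN` and `N ≅ λM`. -/
def MutuallyLinked (A : Type u) [CommRing A] (M N : Type u) [AddCommGroup M] [Module A M]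
    [AddCommGroup N] [Module A N] : Prop :=
  ∃ (F : MinRes A M) (G : MinRes A N),
    Nonempty (F.lambdaMod ≃ₗ[A] N) ∧ Nonempty (G.lambdaMod ≃ₗ[A] M)

/-- `M` is linked to `N` by the ideal `c`: `c` annihilates both modules and they are
horizontally linked to each other as `R ⧸ c`-modules. -/
def LinkedBy (R : Type u) [CommRing R] (c : Ideal R) (M N : Type u) [AddCommGroup M]
    [Module R M] [AddCommGroup N] [Module R N] : Prop :=
  ∃ (hM : Module.IsTorsionBySet R M c) (hN : Module.IsTorsionBySet R N c),
    letI := hM.module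
    letI := hN.module
    MutuallyLinked (R ⧸ c) M N

/-- A stable module: no nonzero projective direct summand. -/
def IsStableModule (R : Type u) [CommRing R] (M : Type u) [AddCommGroup M] [Module R M] : Prop :=
  ∀ N : Submodule R M, Module.Projective R ↥N → (∃ N' : Submodule R M, IsCompl N N') → N = ⊥

/-- `M` has G-dimension zero: `M` is finitely generated and reflexive,
and `Ext^i(M,R) = 0 = Ext^i(M*,R)` for all `i > 0`. -/
def IsGDimZero (R : Type u) [CommRing R] (M : Type u) [AddCommGroup M] [Module R M] : Prop :=
  Module.Finite R M ∧ Function.Bijective (Module.Dual.eval R M) ∧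
    (∀ i : ℕ, 0 < i → Subsingleton (extM R i M R)) ∧
    (∀ i : ℕ, 0 < i → Subsingleton (extM R i (Module.Dual R M) R))

/-- `M` admits a resolution of length `≤ n` by modules of G-dimension zero. -/
def GDimLE (R : Type u) [CommRing R] : ℕ → ModuleCat.{u} R → Prop
  | 0, M => IsGDimZero R ↥M
  | n + 1, M =>
    ∃ (G : ModuleCat.{u} R) (f : ↥G →ₗ[R] ↥M), IsGDimZero R ↥G ∧ Function.Surjective f ∧
      GDimLE R n (ModuleCat.of R ↥(LinearMap.ker f))

/-- The G-dimension of `M`: the minimal length of a resolution of `M` by modules of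
G-dimension zero (`∞` if there is none). -/
def GDim (R : Type u) [CommRing R] (M : Type u) [AddCommGroup M] [Module R M] : ℕ∞ :=
  sInf {n : ℕ∞ | ∃ k : ℕ, n = k ∧ GDimLE R k (ModuleCat.of R M)}

/-- The reduced grade of `M`: `rgr M = inf{ i > 0 | Ext^i(M,R) ≠ 0 }`. -/
def rgr (R : Type u) [CommRing R] (M : Type u) [AddCommGroup M] [Module R M] : ℕ∞ :=
  sInf {n : ℕ∞ | ∃ k : ℕ, n = k ∧ 0 < k ∧ ¬ Subsingleton (extM R k M R)}

/-- The grade of `M`: `gr M = inf{ i ≥ 0 | Ext^i(M,R) ≠ 0 }`. -/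
def egrade (R : Type u) [CommRing R] (M : Type u) [AddCommGroup M] [Module R M] : ℕ∞ :=
  sInf {n : ℕ∞ | ∃ k : ℕ, n = k ∧ ¬ Subsingleton (extM R k M R)}

/-- `depth_I(M) = inf{ i | Ext^i(R/I, M) ≠ 0 }`; for `I` the maximal ideal of a
local ring this is the depth of `M`. -/
def edepth (R : Type u) [CommRing R] (I : Ideal R) (M : Type u) [AddCommGroup M]
    [Module R M] : ℕ∞ :=
  sInf {n : ℕ∞ | ∃ k : ℕ, n = k ∧ ¬ Subsingleton (extM R k (R ⧸ I) M)}

/-- The depth of the local ring `R`. -/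
def rdepth (R : Type u) [CommRing R] [IsLocalRing R] : ℕ∞ :=
  edepth R (IsLocalRing.maximalIdeal R) R

/-- `depth_{R_p}(M_p)`. -/
def locDepth (R : Type u) [CommRing R] (p : Ideal R) [p.IsPrime] (M : Type u) [AddCommGroup M]
    [Module R M] : ℕ∞ :=
  edepth (Localization.AtPrime p) (IsLocalRing.maximalIdeal (Localization.AtPrime p))
    (LocalizedModule p.primeCompl M)

/-- `depth R_p`. -/
def locRingDepth (R : Type u) [CommRing R] (p : Ideal R) [p.IsPrime] : ℕ∞ :=
  rdepth (Localization.AtPrime p)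

/-- `Gdim_{R_p}(M_p)`. -/
def locGDim (R : Type u) [CommRing R] (p : Ideal R) [p.IsPrime] (M : Type u) [AddCommGroup M]
    [Module R M] : ℕ∞ :=
  GDim (Localization.AtPrime p) (LocalizedModule p.primeCompl M)

/-- `rgr_{R_p}(M_p)`. -/
def locRgr (R : Type u) [CommRing R] (p : Ideal R) [p.IsPrime] (M : Type u) [AddCommGroup M]
    [Module R M] : ℕ∞ :=
  rgr (Localization.AtPrime p) (LocalizedModule p.primeCompl M)

/-- `dim_{R_p}(M_p)`, the Krull dimension of the support of `M_p` over `R_p`. -/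
def locDim (R : Type u) [CommRing R] (p : Ideal R) [p.IsPrime] (M : Type u) [AddCommGroup M]
    [Module R M] : WithBot ℕ∞ :=
  ringKrullDim ((Localization.AtPrime p) ⧸
    Module.annihilator (Localization.AtPrime p) (LocalizedModule p.primeCompl M))

/-- `M` satisfies the condition `S̃_k`: `depth_{R_p}(M_p) ≥ min{k, depth R_p}` for all primes. -/
def Stilde (R : Type u) [CommRing R] (k : ℕ) (M : Type u) [AddCommGroup M] [Module R M] : Prop :=
  ∀ (p : Ideal R) (_ : p.IsPrime), min (k : ℕ∞) (locRingDepth R p) ≤ locDepth R p M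

/-- `M` satisfies Serre's condition `(S_k)`:
`depth_{R_p}(M_p) ≥ min{k, dim_{R_p}(M_p)}` for all primes. -/
def SerreS (R : Type u) [CommRing R] (k : ℕ) (M : Type u) [AddCommGroup M] [Module R M] : Prop :=
  ∀ (p : Ideal R) (_ : p.IsPrime),
    min (k : WithBot ℕ∞) (locDim R p M) ≤ (locDepth R p M : WithBot ℕ∞)

/-- `M` is a `k`-th syzygy module. -/
def IsKthSyzygy (R : Type u) [CommRing R] : ℕ → ModuleCat.{u} R → Prop
  | 0, _ => True
  | k + 1, M =>
    ∃ (P : ModuleCat.{u} R) (f : ↥M →ₗ[R] ↥P), Module.Projective R ↥P ∧ Module.Finite R ↥P ∧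
      Function.Injective f ∧ IsKthSyzygy R k (ModuleCat.of R (↥P ⧸ LinearMap.range f))

/-- The `I`-torsion submodule `Γ_I(M) = { x | I^n x = 0 for some n }`. -/
def gammaTorsion (R : Type u) [CommRing R] (I : Ideal R) (M : Type u) [AddCommGroup M]
    [Module R M] : Submodule R M where
  carrier := {x | ∃ n : ℕ, ∀ a ∈ I ^ n, a • x = 0}
  zero_mem' := ⟨0, fun a _ => smul_zero a⟩
  add_mem' := by
    rintro x y ⟨n, hn⟩ ⟨m, hm⟩
    exact ⟨n + m, fun a ha => by
      rw [smul_add, hn a (Ideal.pow_le_pow_right (Nat.le_add_right n m) ha),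
        hm a (Ideal.pow_le_pow_right (Nat.le_add_left m n) ha), add_zero]⟩
  smul_mem' := by
    rintro c x ⟨n, hn⟩
    exact ⟨n, fun a ha => by rw [smul_comm, hn a ha, smul_zero]⟩

/-- `N` has finite flat dimension (characterized by uniform vanishing of `Tor`). -/
def HasFiniteFlatDim (R : Type u) [CommRing R] (N : Type u) [AddCommGroup N] [Module R N] : Prop :=
  ∃ n : ℕ, ∀ i : ℕ, n < i → ∀ (M : ModuleCat.{u} R), Subsingleton (torM R i ↥M N)

/-- `N` has finite injective dimension (characterized by uniform vanishing of `Ext`). -/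
def HasFiniteInjDim (R : Type u) [CommRing R] (N : Type u) [AddCommGroup N] [Module R N] : Prop :=
  ∃ n : ℕ, ∀ i : ℕ, n < i → ∀ (M : ModuleCat.{u} R), Subsingleton (extM R i ↥M N)

/-- `K` is a semidualizing `R`-module. -/
def IsSemidualizing (R : Type u) [CommRing R] (K : Type u) [AddCommGroup K] [Module R K] : Prop :=
  Module.Finite R K ∧ Function.Bijective (LinearMap.lsmul R K) ∧
    ∀ i : ℕ, 0 < i → Subsingleton (extM R i K K)

/-- The biduality map `M → Hom(Hom(M,K),K)`. -/
def evalK (R : Type u) [CommRing R] (K M : Type u) [AddCommGroup K] [Module R K]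
    [AddCommGroup M] [Module R M] : M →ₗ[R] ((M →ₗ[R] K) →ₗ[R] K) :=
  LinearMap.applyₗ

/-- `M` has `G_K`-dimension zero. -/
def IsGKDimZero (R : Type u) [CommRing R] (K M : Type u) [AddCommGroup K] [Module R K]
    [AddCommGroup M] [Module R M] : Prop :=
  Module.Finite R M ∧ Function.Bijective (evalK R K M) ∧
    (∀ i : ℕ, 0 < i → Subsingleton (extM R i M K)) ∧
    (∀ i : ℕ, 0 < i → Subsingleton (extM R i (M →ₗ[R] K) K))

/-- `M` admits a resolution of length `≤ n` by modules of `G_K`-dimension zero. -/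
def GKDimLE (R : Type u) [CommRing R] (K : Type u) [AddCommGroup K] [Module R K] :
    ℕ → ModuleCat.{u} R → Prop
  | 0, M => IsGKDimZero R K ↥M
  | n + 1, M =>
    ∃ (G : ModuleCat.{u} R) (f : ↥G →ₗ[R] ↥M), IsGKDimZero R K ↥G ∧ Function.Surjective f ∧
      GKDimLE R K n (ModuleCat.of R ↥(LinearMap.ker f))

/-- The `G_K`-dimension of `M`. -/
def GKDim (R : Type u) [CommRing R] (K M : Type u) [AddCommGroup K] [Module R K]
    [AddCommGroup M] [Module R M] : ℕ∞ :=
  sInf {n : ℕ∞ | ∃ k : ℕ, n = k ∧ GKDimLE R K k (ModuleCat.of R M)}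

/-- The grade of a module, `gr_R(M) = grade(Ann_R(M), R) = inf{i | Ext^i(R/Ann M, R) ≠ 0}`. -/
def grAnn (R : Type u) [CommRing R] (M : Type u) [AddCommGroup M] [Module R M] : ℕ∞ :=
  egrade R (R ⧸ Module.annihilator R M)

/-- The grade of an ideal, `grade(I) = inf{i | Ext^i(R/I, R) ≠ 0}`. -/
def gradeI (R : Type u) [CommRing R] (I : Ideal R) : ℕ∞ :=
  egrade R (R ⧸ I)

/-- The ideal `I` is `G_K`-Gorenstein: `R/I` is `G_K`-perfect and `Ext^{gr I}(R/I, K)` is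
cyclic. -/
def IsGKGorensteinIdeal (R : Type u) [CommRing R] (K : Type u) [AddCommGroup K] [Module R K]
    (I : Ideal R) : Prop :=
  ∃ n : ℕ, grAnn R (R ⧸ I) = (n : ℕ∞) ∧ GKDim R K (R ⧸ I) = (n : ℕ∞) ∧
    ∃ x : extM R n (R ⧸ I) K, Submodule.span R {x} = ⊤

end

/-!
Let `P` be a resolution of `M` by finitely generated projective modules and `D = Hom(P, R)`. Reduced
G-perfection says that `D` has cohomology only in degrees `0` and `n`, and `Hⁿ(D) = Extⁿ(M, R)`; the
image of `D⁰ → D¹` is `λM`. Let `Δ` be the `δ`-functor `Tor(-, N)` or `Ext(-, N)`.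

* The cokernel `W` of `Dⁿ → Dⁿ⁺¹` is `Δ`-acyclic. As `Gdim M ≤ n`, the syzygies of `M` from the
  `n`-th on have G-dimension zero and `W` is the dual of one of them, so `Extⁱ(W, R) = 0` for
  `i > 0`. If `Δ` has finite dimension, shifting along the exact tail of `D` moves `Δᵢ(W)` into
  degrees where `Δ` vanishes. If instead the other one of the two `δ`-functors has finite dimension,
  let `L` be a resolution of `W`: then `Hom(L, R)` is exact in positive degrees, the same shift
  shows that it stays so under the other functor, and `L* ⊗ N ≅ Hom(L, N)` and
  `Hom(L*, N) ≅ L ⊗ N` turn this into `Δᵢ(W) = 0`.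
* Since `W` is `Δ`-acyclic, `Extⁿ(M, R)` and the cokernel of `Dⁿ⁻¹ → Dⁿ` have the same `Δᵢ` for
  `i > 0`. Shifting down along the exact part of `D` gives the homology of `Δ₀(D)` in degree `n - i`
  when `i < n`, and `Δᵢ₋ₙ(λM)` when `i > n`. Finally `Δ₀(D)` is `Hom(P, N)` or `P ⊗ N`.
-/

universe v v' w w'

noncomputable section

open Limits

section HomologicalAlgebra

variable {C : Type w} [Category.{v} C] [Abelian C] {A : Type w'} [Category.{v'} A] [Abelian A]

lemma nonempty_homology_iso_of_isCokernel_of_isKernel (S : ShortComplex A) {Q H : A}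
    {p : S.X₂ ⟶ Q} {wp : S.f ≫ p = 0} (hp : IsColimit (CokernelCofork.ofπ p wp))
    {q : Q ⟶ S.X₃} (hpq : p ≫ q = S.g)
    {k : H ⟶ Q} {wk : k ≫ q = 0} (hk : IsLimit (KernelFork.ofι k wk)) :
    Nonempty (S.homology ≅ H) := by
  obtain rfl : hp.desc (CokernelCofork.ofπ S.g S.zero) = q :=
    Cofork.IsColimit.hom_ext hp ((hp.fac _ WalkingParallelPair.one).trans hpq.symm)
  let h : S.RightHomologyData :=
    { Q := Q, H := H, p := p, ι := k, wp := wp, hp := hp, wι := wk, hι := hk }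
  exact ⟨h.homologyIso⟩

section Opcycles

variable {ι : Type*} {c : ComplexShape ι} (K : HomologicalComplex C c) {i j : ι}

lemma fromOpcycles_comp_pOpcycles (i j : ι) : K.fromOpcycles i j ≫ K.pOpcycles j = 0 := by
  rw [← cancel_epi (K.pOpcycles i), K.p_fromOpcycles_assoc, K.d_pOpcycles, comp_zero]

lemma exact_d_pOpcycles (hij : c.Rel i j) :
    (ShortComplex.mk _ _ (K.d_pOpcycles i j)).Exact :=
  ShortComplex.exact_of_g_is_cokernel _ (K.opcyclesIsCokernel i j (c.prev_eq' hij))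

lemma exact_fromOpcycles_pOpcycles (hij : c.Rel i j) :
    (ShortComplex.mk _ _ (fromOpcycles_comp_pOpcycles K i j)).Exact := by
  let φ : ShortComplex.mk _ _ (K.d_pOpcycles i j) ⟶
      ShortComplex.mk _ _ (fromOpcycles_comp_pOpcycles K i j) :=
    { τ₁ := K.pOpcycles i, τ₂ := 𝟙 _, τ₃ := 𝟙 _ }
  have : Epi φ.τ₁ := inferInstanceAs (Epi (K.pOpcycles i))
  have : IsIso φ.τ₂ := inferInstanceAs (IsIso (𝟙 _))
  have : Mono φ.τ₃ := inferInstanceAs (Mono (𝟙 _))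
  exact (ShortComplex.exact_iff_of_epi_of_isIso_of_mono φ).mp (exact_d_pOpcycles K hij)

lemma mono_fromOpcycles (hij : c.Rel i j) (hK : K.ExactAt i) : Mono (K.fromOpcycles i j) :=
  Preadditive.mono_of_isZero_kernel' _ (K.homologyIsKernel i j (c.next_eq' hij))
    hK.isZero_homology

lemma shortExact_opcycles (hij : c.Rel i j) (hK : K.ExactAt i) :
    (ShortComplex.mk _ _ (fromOpcycles_comp_pOpcycles K i j)).ShortExact where
  exact := exact_fromOpcycles_pOpcycles K hij
  mono_f := mono_fromOpcycles K hij hK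
  epi_g := inferInstanceAs (Epi (K.pOpcycles j))

/-- The image of the differential entering `K.X j`, realised as the kernel of the projection onto
the opcycles. -/
abbrev boundaries (j : ι) : C := kernel (K.pOpcycles j)

lemma shortExact_boundaries (j : ι) :
    (ShortComplex.mk _ _ (kernel.condition (K.pOpcycles j))).ShortExact where
  exact := ShortComplex.exact_kernel _
  mono_f := inferInstanceAs (Mono (kernel.ι _))
  epi_g := inferInstanceAs (Epi (K.pOpcycles j))

/-- The corestriction of the differential to its image. -/
def opcyclesToBoundaries (i j : ι) : K.opcycles i ⟶ boundaries K j :=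
  kernel.lift _ _ (fromOpcycles_comp_pOpcycles K i j)

lemma opcyclesToBoundaries_comp_ι (i j : ι) :
    opcyclesToBoundaries K i j ≫ kernel.ι _ = K.fromOpcycles i j :=
  kernel.lift_ι _ _ _

lemma homologyι_comp_opcyclesToBoundaries (i j : ι) :
    K.homologyι i ≫ opcyclesToBoundaries K i j = 0 := by
  rw [← cancel_mono (kernel.ι _), Category.assoc, opcyclesToBoundaries_comp_ι,
    K.homologyι_comp_fromOpcycles, zero_comp]

lemma shortExact_homology_opcycles_boundaries (hij : c.Rel i j) :
    (ShortComplex.mk _ _ (homologyι_comp_opcyclesToBoundaries K i j)).ShortExact where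
  exact := ShortComplex.exact_of_f_is_kernel _
    (isKernelOfComp (kernel.ι (K.pOpcycles j)) _ (K.homologyIsKernel i j (c.next_eq' hij)) _
      (opcyclesToBoundaries_comp_ι K i j))
  mono_f := inferInstanceAs (Mono (K.homologyι i))
  epi_g := (ShortComplex.exact_iff_epi_kernel_lift _).mp (exact_fromOpcycles_pOpcycles K hij)

lemma nonempty_homology_mapHomologicalComplex_iso (Φ : C ⥤ A) [Φ.Additive]
    [PreservesFiniteColimits Φ] (hij : c.Rel i j) {H : A} {k : H ⟶ Φ.obj (K.opcycles i)}
    {wk : k ≫ Φ.map (K.fromOpcycles i j) = 0} (hk : IsLimit (KernelFork.ofι k wk)) :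
    Nonempty (((Φ.mapHomologicalComplex c).obj K).homology i ≅ H) := by
  obtain rfl := c.next_eq' hij
  exact nonempty_homology_iso_of_isCokernel_of_isKernel
    (((Φ.mapHomologicalComplex c).obj K).sc i) (p := Φ.map (K.pOpcycles i))
    (wp := by
      change Φ.map _ ≫ _ = 0
      rw [← Φ.map_comp, K.d_pOpcycles, Φ.map_zero])
    (CokernelCofork.mapIsColimit _ (K.opcyclesIsCokernel _ i rfl) Φ)
    ((Φ.map_comp _ _).symm.trans (congrArg Φ.map (K.p_fromOpcycles i _))) hk

end Opcycles

/-- A homological `δ`-functor which vanishes on projective objects in positive degrees. Naturality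
of the connecting maps is not part of the data. -/
structure DeltaFunctor (C : Type w) [Category.{v} C] [Abelian C]
    (A : Type w') [Category.{v'} A] [Abelian A] where
  T : ℕ → C ⥤ A
  additive (i : ℕ) : (T i).Additive
  δ {S : ShortComplex C} (hS : S.ShortExact) (i : ℕ) : (T (i + 1)).obj S.X₃ ⟶ (T i).obj S.X₁
  δ_comp {S : ShortComplex C} (hS : S.ShortExact) (i : ℕ) : δ hS i ≫ (T i).map S.f = 0
  comp_δ {S : ShortComplex C} (hS : S.ShortExact) (i : ℕ) : (T (i + 1)).map S.g ≫ δ hS i = 0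
  exact₁ {S : ShortComplex C} (hS : S.ShortExact) (i : ℕ) :
    (ShortComplex.mk _ _ (δ_comp hS i)).Exact
  exact₂ {S : ShortComplex C} (hS : S.ShortExact) (i : ℕ) : (S.map (T i)).Exact
  exact₃ {S : ShortComplex C} (hS : S.ShortExact) (i : ℕ) :
    (ShortComplex.mk _ _ (comp_δ hS i)).Exact
  epi_map_g {S : ShortComplex C} (hS : S.ShortExact) : Epi ((T 0).map S.g)
  isZero_of_projective (X : C) [Projective X] {i : ℕ} (hi : 0 < i) : IsZero ((T i).obj X)

namespace DeltaFunctor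

attribute [instance] additive

variable (Δ : DeltaFunctor C A) {S : ShortComplex C}

instance : PreservesFiniteColimits (Δ.T 0) :=
  ((Functor.preservesFiniteColimits_tfae (Δ.T 0)).out 0 3 :).mp
    fun _ hS => ⟨Δ.exact₂ hS 0, Δ.epi_map_g hS⟩

/-- `X` is `Δ`-acyclic if the positive degree part of `Δ` vanishes on it. -/
def IsAcyclic (X : C) : Prop :=
  ∀ ⦃i : ℕ⦄, 0 < i → IsZero ((Δ.T i).obj X)

/-- `Δ` has dimension at most `d` if it vanishes in all degrees above `d`. -/
def DimLE (d : ℕ) : Prop :=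
  ∀ ⦃i : ℕ⦄, d < i → ∀ X : C, IsZero ((Δ.T i).obj X)

variable {Δ}

lemma isAcyclic_of_projective (X : C) [Projective X] : Δ.IsAcyclic X :=
  fun _ hi => Δ.isZero_of_projective X hi

lemma IsAcyclic.of_iso {X Y : C} (hY : Δ.IsAcyclic Y) (e : X ≅ Y) : Δ.IsAcyclic X :=
  fun i hi => (hY hi).of_iso ((Δ.T i).mapIso e)

lemma mono_δ (hS : S.ShortExact) {i : ℕ} (h : IsZero ((Δ.T (i + 1)).obj S.X₂)) :
    Mono (Δ.δ hS i) :=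
  (Δ.exact₃ hS i).mono_g (h.eq_of_src _ _)

lemma nonempty_shiftIso (hS : S.ShortExact) (hX₂ : Δ.IsAcyclic S.X₂) {i : ℕ} (hi : 0 < i) :
    Nonempty ((Δ.T (i + 1)).obj S.X₃ ≅ (Δ.T i).obj S.X₁) := by
  have := Δ.mono_δ hS (hX₂ i.succ_pos)
  have : Epi (Δ.δ hS i) := (Δ.exact₁ hS i).epi_f ((hX₂ hi).eq_of_tgt _ _)
  have := isIso_of_mono_of_epi (Δ.δ hS i)
  exact ⟨asIso (Δ.δ hS i)⟩

lemma nonempty_mapIso (hS : S.ShortExact) (hX₃ : Δ.IsAcyclic S.X₃) {i : ℕ} (hi : 0 < i) :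
    Nonempty ((Δ.T i).obj S.X₁ ≅ (Δ.T i).obj S.X₂) := by
  have : Mono ((Δ.T i).map S.f) :=
    (Δ.exact₁ hS i).mono_g ((hX₃ i.succ_pos).eq_of_src _ _)
  have : Epi ((Δ.T i).map S.f) := (Δ.exact₂ hS i).epi_f ((hX₃ hi).eq_of_tgt _ _)
  have := isIso_of_mono_of_epi ((Δ.T i).map S.f)
  exact ⟨asIso ((Δ.T i).map S.f)⟩

lemma mono_map_f (hS : S.ShortExact) (hX₃ : Δ.IsAcyclic S.X₃) : Mono ((Δ.T 0).map S.f) :=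
  (Δ.exact₁ hS 0).mono_g ((hX₃ one_pos).eq_of_src _ _)

lemma shortExact_map (hS : S.ShortExact) (hX₃ : Δ.IsAcyclic S.X₃) :
    (S.map (Δ.T 0)).ShortExact where
  exact := Δ.exact₂ hS 0
  mono_f := mono_map_f hS hX₃
  epi_g := Δ.epi_map_g hS

lemma IsAcyclic.of_shortExact₁ (hS : S.ShortExact) (hX₂ : Δ.IsAcyclic S.X₂)
    (hX₃ : Δ.IsAcyclic S.X₃) : Δ.IsAcyclic S.X₁ :=
  fun i hi => (Δ.exact₁ hS i).isZero_of_both_zeros ((hX₃ i.succ_pos).eq_of_src _ _)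
    ((hX₂ hi).eq_of_tgt _ _)

lemma IsAcyclic.of_shortExact₂ (hS : S.ShortExact) (hX₁ : Δ.IsAcyclic S.X₁)
    (hX₃ : Δ.IsAcyclic S.X₃) : Δ.IsAcyclic S.X₂ :=
  fun i hi => (Δ.exact₂ hS i).isZero_of_both_zeros ((hX₁ hi).eq_of_src _ _)
    ((hX₃ hi).eq_of_tgt _ _)

lemma IsAcyclic.of_shortExact₃ (hS : S.ShortExact) (hX₁ : Δ.IsAcyclic S.X₁)
    (hX₂ : Δ.IsAcyclic S.X₂) (hf : Mono ((Δ.T 0).map S.f)) : Δ.IsAcyclic S.X₃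
  | 1, _ => (Δ.exact₃ hS 0).isZero_of_both_zeros ((hX₂ one_pos).eq_of_src _ _)
      ((cancel_mono ((Δ.T 0).map S.f)).mp (by rw [Δ.δ_comp, zero_comp]))
  | i + 2, _ => (Δ.exact₃ hS (i + 1)).isZero_of_both_zeros
      ((hX₂ (i + 1).succ_pos).eq_of_src _ _) ((hX₁ i.succ_pos).eq_of_tgt _ _)

section Complexes

variable {ι : Type*} {c : ComplexShape ι} {K : HomologicalComplex C c} {i j : ι}

lemma nonempty_opcycles_shiftIso (hij : c.Rel i j) (hK : K.ExactAt i) (hX : Δ.IsAcyclic (K.X j))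
    {k : ℕ} (hk : 0 < k) :
    Nonempty ((Δ.T (k + 1)).obj (K.opcycles j) ≅ (Δ.T k).obj (K.opcycles i)) :=
  Δ.nonempty_shiftIso (shortExact_opcycles K hij hK) hX hk

lemma nonempty_homology_iso_opcycles (hij : c.Rel i j) (hK : K.ExactAt i)
    (hX : Δ.IsAcyclic (K.X j)) :
    Nonempty ((((Δ.T 0).mapHomologicalComplex c).obj K).homology i ≅
      (Δ.T 1).obj (K.opcycles j)) := by
  have hS := shortExact_opcycles K hij hK
  have := Δ.mono_δ hS (hX one_pos)
  exact nonempty_homology_mapHomologicalComplex_iso K (Δ.T 0) hij (Δ.exact₁ hS 0).fIsKernel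

lemma IsAcyclic.boundaries (hX : Δ.IsAcyclic (K.X j)) (hW : Δ.IsAcyclic (K.opcycles j)) :
    Δ.IsAcyclic (boundaries K j) :=
  .of_shortExact₁ (shortExact_boundaries K j) hX hW

lemma nonempty_homology_iso_opcycles_of_isAcyclic (hij : c.Rel i j) (hX : Δ.IsAcyclic (K.X j))
    (hW : Δ.IsAcyclic (K.opcycles j)) {k : ℕ} (hk : 0 < k) :
    Nonempty ((Δ.T k).obj (K.homology i) ≅ (Δ.T k).obj (K.opcycles i)) :=
  nonempty_mapIso (shortExact_homology_opcycles_boundaries K hij) (hX.boundaries hW) hk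

lemma nonempty_map_homology_iso_homology_map (hij : c.Rel i j) (hX : Δ.IsAcyclic (K.X j))
    (hW : Δ.IsAcyclic (K.opcycles j)) :
    Nonempty ((Δ.T 0).obj (K.homology i) ≅
      (((Δ.T 0).mapHomologicalComplex c).obj K).homology i) := by
  have hS := shortExact_homology_opcycles_boundaries K hij
  have : Mono ((Δ.T 0).map (kernel.ι (K.pOpcycles j))) :=
    mono_map_f (shortExact_boundaries K j) hW
  have : Mono ((ShortComplex.mk _ _ (homologyι_comp_opcyclesToBoundaries K i j)).map (Δ.T 0)).f :=
    mono_map_f hS (hX.boundaries hW)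
  have hker : IsLimit (KernelFork.ofι (f := (Δ.T 0).map (opcyclesToBoundaries K i j)) _ _) :=
    (Δ.exact₂ hS 0).fIsKernel
  exact (nonempty_homology_mapHomologicalComplex_iso K (Δ.T 0) hij
    (isKernelCompMono hker ((Δ.T 0).map (kernel.ι (K.pOpcycles j)))
      (by rw [← opcyclesToBoundaries_comp_ι, Functor.map_comp]))).map Iso.symm

end Complexes

section Resolutions

variable {X : C} (P : ProjectiveResolution X)

lemma nonempty_iso_opcycles_of_projectiveResolution {i : ℕ} (hi : 0 < i) (k : ℕ) {m : ℕ}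
    (hm : m = i + k) : Nonempty ((Δ.T m).obj X ≅ (Δ.T i).obj (P.complex.opcycles k)) := by
  induction k generalizing i with
  | zero =>
    obtain rfl := hm
    exact ⟨(Δ.T _).mapIso (P.isColimitCokernelCofork.coconePointUniqueUpToIso
      (P.complex.opcyclesIsCokernel 1 0 (by simp)))⟩
  | succ k ih =>
    obtain ⟨e⟩ := ih (i := i + 1) i.succ_pos (by lia)
    obtain ⟨s⟩ := nonempty_opcycles_shiftIso (Δ := Δ) (K := P.complex) (i := k + 1) (j := k) rfl
      (P.complex_exactAt_succ k) (isAcyclic_of_projective _) hi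
    exact ⟨e ≪≫ s⟩

lemma nonempty_homology_iso_of_projectiveResolution (i : ℕ) :
    Nonempty ((((Δ.T 0).mapHomologicalComplex _).obj P.complex).homology i ≅ (Δ.T i).obj X) := by
  match i with
  | 0 => exact ⟨ChainComplex.isoHomologyι₀ _ ≪≫ asIso (P.fromLeftDerivedZero' (Δ.T 0))⟩
  | i + 1 =>
    obtain ⟨h⟩ := nonempty_homology_iso_opcycles (Δ := Δ) (K := P.complex) (i := i + 1) (j := i) rfl
      (P.complex_exactAt_succ i) (isAcyclic_of_projective _)
    obtain ⟨e⟩ := nonempty_iso_opcycles_of_projectiveResolution (Δ := Δ) P one_pos i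
      (m := i + 1) (by lia)
    exact ⟨h ≪≫ e.symm⟩

end Resolutions

section CochainComplexes

variable {D : CochainComplex C ℕ}

lemma nonempty_iso_opcycles_of_exactAt (hD : ∀ j, Δ.IsAcyclic (D.X j)) {i j k i' j' : ℕ}
    (hi : 0 < i) (hi' : i' = i + k) (hj' : j' = j + k) (hex : ∀ l, j ≤ l → l < j' → D.ExactAt l) :
    Nonempty ((Δ.T i').obj (D.opcycles j') ≅ (Δ.T i).obj (D.opcycles j)) := by
  subst hi' hj'
  induction k with
  | zero => exact ⟨Iso.refl _⟩
  | succ k ih =>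
    obtain ⟨e⟩ := ih fun l hl hlk => hex l hl (by lia)
    obtain ⟨s⟩ := nonempty_opcycles_shiftIso (Δ := Δ) (K := D) (i := j + k) (j := j + (k + 1)) rfl
      (hex _ (by lia) (by lia)) (hD _) (k := i + k) (by lia)
    exact ⟨s ≪≫ e⟩

lemma DimLE.isAcyclic_opcycles {d : ℕ} (hΔ : Δ.DimLE d) (hD : ∀ j, Δ.IsAcyclic (D.X j)) {j : ℕ}
    (hex : ∀ l, j ≤ l → D.ExactAt l) : Δ.IsAcyclic (D.opcycles j) := fun i hi => by
  obtain ⟨e⟩ := nonempty_iso_opcycles_of_exactAt hD hi (k := d) rfl rfl fun l hl _ => hex l hl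
  exact (hΔ (by lia) _).of_iso e.symm

lemma DimLE.isZero_homology_map {d : ℕ} (hΔ : Δ.DimLE d)
    (hD : ∀ j, Δ.IsAcyclic (D.X j)) {i : ℕ} (hex : ∀ l, i ≤ l → D.ExactAt l) :
    IsZero ((((Δ.T 0).mapHomologicalComplex _).obj D).homology i) := by
  obtain ⟨e⟩ := nonempty_homology_iso_opcycles (Δ := Δ) (K := D) (i := i) (j := i + 1) rfl
    (hex i le_rfl) (hD _)
  exact (hΔ.isAcyclic_opcycles hD (fun l hl => hex l (by lia)) one_pos).of_iso e

theorem nonempty_homology_iso_homology_map (hD : ∀ j, Δ.IsAcyclic (D.X j)) {i j n : ℕ}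
    (hW : Δ.IsAcyclic (D.opcycles (n + 1))) (hex : ∀ l, 0 < l → l < n → D.ExactAt l)
    (hj : 0 < j) (hn : i + j = n) :
    Nonempty ((Δ.T i).obj (D.homology n) ≅
      (((Δ.T 0).mapHomologicalComplex _).obj D).homology j) := by
  obtain rfl | hi := i.eq_zero_or_pos
  · obtain rfl : j = n := by lia
    exact nonempty_map_homology_iso_homology_map rfl (hD _) hW
  · obtain ⟨e₁⟩ := nonempty_homology_iso_opcycles_of_isAcyclic rfl (hD _) hW hi
    obtain ⟨e₂⟩ := nonempty_iso_opcycles_of_exactAt hD one_pos (i' := i) (j := j + 1) (j' := n)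
      (k := i - 1) (by lia) (by lia) fun l hl => hex l (by lia)
    obtain ⟨e₃⟩ := nonempty_homology_iso_opcycles (Δ := Δ) (K := D) (i := j) (j := j + 1) rfl
      (hex j hj (by lia)) (hD _)
    exact ⟨e₁ ≪≫ e₂ ≪≫ e₃.symm⟩

theorem nonempty_homology_iso_boundaries (hD : ∀ j, Δ.IsAcyclic (D.X j)) {i k n : ℕ}
    (hW : Δ.IsAcyclic (D.opcycles (n + 1))) (hex : ∀ l, 0 < l → l < n → D.ExactAt l)
    (hn : 0 < n) (hk : 0 < k) (hi : i = k + n) :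
    Nonempty ((Δ.T i).obj (D.homology n) ≅ (Δ.T k).obj (boundaries D 1)) := by
  obtain ⟨e₁⟩ := nonempty_homology_iso_opcycles_of_isAcyclic (k := i) rfl (hD _) hW (by lia)
  obtain ⟨e₂⟩ := nonempty_iso_opcycles_of_exactAt hD k.succ_pos (i' := i) (j := 1) (j' := n)
    (k := n - 1) (by lia) (by lia) hex
  obtain ⟨e₃⟩ := nonempty_shiftIso (shortExact_boundaries D 1) (hD 1) hk
  exact ⟨e₁ ≪≫ e₂ ≪≫ e₃⟩

end CochainComplexes

end DeltaFunctor

end HomologicalAlgebra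

section Ext

open Abelian

variable (R : Type u) [CommRing R] {C : Type w} [Category.{v} C] [Abelian C] [Linear R C]
  [HasExt.{v} C] (N : C)

/-- `Extⁱ(-, N)`, as a covariant functor to the opposite of the category of modules. -/
def extFunctorOp (i : ℕ) : C ⥤ (ModuleCat.{v} R)ᵒᵖ where
  obj X := .op (ModuleCat.of R (Ext X N i))
  map f := (ModuleCat.ofHom (Ext.precompOfLinear (Ext.mk₀ f) R N (zero_add i))).op
  map_id X := Quiver.Hom.unop_inj (by ext; simp)
  map_comp f g := Quiver.Hom.unop_inj (by ext; simp)

instance (i : ℕ) : (extFunctorOp R N i).Additive where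
  map_add {_ _ f g} := Quiver.Hom.unop_inj <| ModuleCat.hom_ext <| LinearMap.ext fun x =>
    (congrArg (fun α => α.comp x (zero_add i)) (Ext.mk₀_add f g)).trans (Ext.add_comp ..)

lemma exact_of_forall_unop {R : Type u} [Ring R] {S : ShortComplex (ModuleCat.{v} R)ᵒᵖ}
    (hS : ∀ y, S.f.unop.hom y = 0 → ∃ x, S.g.unop.hom x = y) : S.Exact :=
  ((ShortComplex.moduleCat_exact_iff S.unop).mpr hS).op

lemma epi_extFunctorOp_zero_map {X Y : C} (f : X ⟶ Y) [Epi f] :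
    Epi ((extFunctorOp R N 0).map f) := by
  refine @op_epi_of_mono _ _ _ _ _ ((ModuleCat.mono_iff_injective _).mpr ?_)
  intro x y hxy
  obtain ⟨x, rfl⟩ := (Ext.mk₀_bijective Y N).surjective x
  obtain ⟨y, rfl⟩ := (Ext.mk₀_bijective Y N).surjective y
  change (Ext.mk₀ f).comp (Ext.mk₀ x) (zero_add 0) =
    (Ext.mk₀ f).comp (Ext.mk₀ y) (zero_add 0) at hxy
  rw [Ext.mk₀_comp_mk₀, Ext.mk₀_comp_mk₀] at hxy
  rw [(cancel_epi f).mp ((Ext.mk₀_bijective X N).injective hxy)]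

/-- The `δ`-functor `Ext(-, N)`. -/
def extDelta : DeltaFunctor C (ModuleCat.{v} R)ᵒᵖ where
  T := extFunctorOp R N
  additive := inferInstance
  δ hS i := (ModuleCat.ofHom (Ext.precompOfLinear hS.extClass R N (add_comm 1 i))).op
  δ_comp hS i := Quiver.Hom.unop_inj <| ModuleCat.hom_ext <| LinearMap.ext fun x =>
    hS.extClass_comp_assoc x (h := add_comm 1 i)
  comp_δ hS i := Quiver.Hom.unop_inj <| ModuleCat.hom_ext <| LinearMap.ext fun x =>
    hS.comp_extClass_assoc x (add_comm 1 i)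
  exact₁ hS i := exact_of_forall_unop fun x hx =>
    Ext.contravariant_sequence_exact₁ hS N x (add_comm 1 i) hx
  exact₂ hS i := exact_of_forall_unop fun x hx =>
    Ext.contravariant_sequence_exact₂ hS N x hx
  exact₃ hS i := exact_of_forall_unop fun x hx =>
    Ext.contravariant_sequence_exact₃ hS N x hx (add_comm 1 i)
  epi_map_g hS :=
    have := hS.epi_g
    epi_extFunctorOp_zero_map R N _
  isZero_of_projective X _ i hi := by
    obtain ⟨i, rfl⟩ := Nat.exists_eq_succ_of_ne_zero hi.ne'
    have : Subsingleton (Ext X N (i + 1)) := subsingleton_of_forall_eq 0 Ext.eq_zero_of_projective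
    exact (ModuleCat.isZero_of_subsingleton _).op

/-- `Ext⁰(-, N)` is `Hom(-, N)`. -/
def extDeltaZeroIso : (extDelta R N).T 0 ≅ ((linearYoneda R C).obj N).rightOp :=
  NatIso.ofComponents (fun X => (Ext.linearEquiv₀ (R := R) (X := X) (Y := N)).symm.toModuleIso.op)
    fun f => Quiver.Hom.unop_inj <| ModuleCat.hom_ext <| LinearMap.ext fun g =>
      Ext.mk₀_comp_mk₀ f g

end Ext

section Tor

open MonoidalCategory

variable {R : Type u} [CommRing R]

/-- The functor `X ↦ X ⊗ K` for a chain complex `K`. -/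
def tensorComplex (K : ChainComplex (ModuleCat.{u} R) ℕ) :
    ModuleCat.{u} R ⥤ ChainComplex (ModuleCat.{u} R) ℕ where
  obj X := (((tensoringLeft _).obj X).mapHomologicalComplex _).obj K
  map f := (NatTrans.mapHomologicalComplex ((tensoringLeft _).map f) _).app K
  map_id X := by ext i : 1; exact id_whiskerRight X (K.X i)
  map_comp f g := by ext i : 1; exact comp_whiskerRight f g (K.X i)

instance (K : ChainComplex (ModuleCat.{u} R) ℕ) : (tensorComplex K).Additive where
  map_add := by intros; ext i : 1; exact MonoidalPreadditive.add_whiskerRight _ _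

lemma flat_of_projective (X : ModuleCat.{u} R) [hX : Projective X] : Module.Flat R X :=
  have := (IsProjective.iff_projective X).mpr hX
  inferInstance

variable {N : ModuleCat.{u} R} (Q : ProjectiveResolution N)

lemma shortExact_map_tensorComplex {S : ShortComplex (ModuleCat.{u} R)} (hS : S.ShortExact) :
    (S.map (tensorComplex Q.complex)).ShortExact :=
  HomologicalComplex.shortExact_of_degreewise_shortExact _ fun i =>
    have := flat_of_projective (Q.complex.X i)
    hS.map_of_exact (tensorRight (Q.complex.X i))

lemma isZero_homology_tensorComplex (X : ModuleCat.{u} R) [Module.Flat R X] {i : ℕ} (hi : 0 < i) :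
    IsZero (((tensorComplex Q.complex).obj X).homology i) := by
  obtain ⟨i, rfl⟩ := Nat.exists_eq_succ_of_ne_zero hi.ne'
  rw [← HomologicalComplex.exactAt_iff_isZero_homology,
    HomologicalComplex.exactAt_iff' _ (i + 2) (i + 1) i (by simp) (by simp)]
  exact (Q.exact_succ i).map (tensorLeft X)

lemma isIso_fromLeftDerivedZero'_tensoringLeft (X : ModuleCat.{u} R) :
    IsIso (Q.fromLeftDerivedZero' ((tensoringLeft (ModuleCat.{u} R)).obj X)) :=
  have : PreservesFiniteColimits ((tensoringLeft (ModuleCat.{u} R)).obj X) :=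
    inferInstanceAs (PreservesFiniteColimits (tensorLeft X))
  inferInstance

/-- Right exactness of the tensor product identifies `H₀(- ⊗ Q)` with `- ⊗ N`. -/
def tensorComplexHomologyZeroIso :
    tensorComplex Q.complex ⋙ HomologicalComplex.homologyFunctor _ _ 0 ≅ tensorRight N :=
  NatIso.ofComponents
    (fun X => ChainComplex.isoHomologyι₀ _ ≪≫
      @asIso _ _ _ _ _ (isIso_fromLeftDerivedZero'_tensoringLeft Q X))
    fun {X Y} f => by
      change _ ≫ HomologicalComplex.homologyι _ 0 ≫ _ = (HomologicalComplex.homologyι _ 0 ≫ _) ≫ _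
      refine (HomologicalComplex.homologyι_naturality_assoc _ 0 _).trans ?_
      rw [Category.assoc]
      congr 1
      refine (cancel_epi (HomologicalComplex.pOpcycles _ _)).mp ?_
      refine (HomologicalComplex.p_opcyclesMap_assoc _ _ _).trans ?_
      erw [ProjectiveResolution.pOpcycles_comp_fromLeftDerivedZero',
        ProjectiveResolution.pOpcycles_comp_fromLeftDerivedZero'_assoc]
      exact (whisker_exchange f (Q.π.f 0)).symm

/-- The `δ`-functor `Tor(-, N)`, computed from a projective resolution of `N`. -/
def torDelta : DeltaFunctor (ModuleCat.{u} R) (ModuleCat.{u} R) where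
  T i := tensorComplex Q.complex ⋙ HomologicalComplex.homologyFunctor _ _ i
  additive := inferInstance
  δ hS i := (shortExact_map_tensorComplex Q hS).δ (i + 1) i rfl
  δ_comp hS i := (shortExact_map_tensorComplex Q hS).δ_comp (i + 1) i rfl
  comp_δ hS i := (shortExact_map_tensorComplex Q hS).comp_δ (i + 1) i rfl
  exact₁ hS i := (shortExact_map_tensorComplex Q hS).homology_exact₁ (i + 1) i rfl
  exact₂ hS i := (shortExact_map_tensorComplex Q hS).homology_exact₂ i
  exact₃ hS i := (shortExact_map_tensorComplex Q hS).homology_exact₃ (i + 1) i rfl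
  epi_map_g {S} hS := by
    have := hS.epi_g
    have : (tensorRight N).PreservesEpimorphisms :=
      preservesEpimorphisms_of_preservesColimitsOfShape _
    have : Epi ((tensorRight N).map S.g) := (tensorRight N).map_epi S.g
    exact ((MorphismProperty.epimorphisms _).arrow_mk_iso_iff
      (Arrow.isoOfNatIso (tensorComplexHomologyZeroIso Q) (Arrow.mk S.g))).mpr this
  isZero_of_projective X _ _ :=
    have := flat_of_projective X
    isZero_homology_tensorComplex Q X

end Tor

section Hom

open MonoidalCategory

variable {R : Type u} [CommRing R]

/-- The functor `Hom_R(-, N)`, with linear maps as the elements of its values. -/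
def homFunctor (N : ModuleCat.{u} R) : ModuleCat.{u} R ⥤ (ModuleCat.{u} R)ᵒᵖ where
  obj X := .op (ModuleCat.of R (X →ₗ[R] N))
  map f := (ModuleCat.ofHom (LinearMap.lcomp R N f.hom)).op

instance (N : ModuleCat.{u} R) : (homFunctor N).Additive where
  map_add {_ _ f g} := Quiver.Hom.unop_inj <| ModuleCat.hom_ext <| LinearMap.ext fun φ =>
    LinearMap.comp_add f.hom g.hom φ

/-- The functor `homFunctor N` is the one represented by `N`. -/
def homFunctorIso (N : ModuleCat.{u} R) :
    ((linearYoneda R (ModuleCat.{u} R)).obj N).rightOp ≅ homFunctor N :=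
  NatIso.ofComponents fun X =>
    (ModuleCat.homLinearEquiv (S := R) (M := X) (N := N)).symm.toModuleIso.op

/-- The cochain complex `Hom_R(K, N)` of a chain complex `K`. -/
abbrev homComplex (K : ChainComplex (ModuleCat.{u} R) ℕ) (N : ModuleCat.{u} R) :
    CochainComplex (ModuleCat.{u} R) ℕ :=
  (((homFunctor N).mapHomologicalComplex _).obj K).unop

/-- For a complex of finitely generated projective modules, `K* ⊗ N` is `Hom(K, N)`. -/
def homComplexTensorIso (K : ChainComplex (ModuleCat.{u} R) ℕ)
    [∀ j, Module.Finite R (K.X j)] [∀ j, Module.Projective R (K.X j)] (N : ModuleCat.{u} R) :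
    ((tensorRight N).mapHomologicalComplex _).obj (homComplex K (ModuleCat.of R R)) ≅
      homComplex K N :=
  HomologicalComplex.Hom.isoOfComponents
    (fun j => (dualTensorHomEquiv R (K.X j) N).toModuleIso)
    fun _ _ _ => ModuleCat.hom_ext <| TensorProduct.ext' fun _ _ => LinearMap.ext fun _ => rfl

/-- For a complex of finitely generated projective modules, `Hom(K*, N)` is `K ⊗ N`; the opposite
accounts for `Hom(-, N)` being contravariant. -/
def homComplexHomIso (K : ChainComplex (ModuleCat.{u} R) ℕ)
    [∀ j, Module.Finite R (K.X j)] [∀ j, Module.Projective R (K.X j)] (N : ModuleCat.{u} R) :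
    ((homFunctor N).mapHomologicalComplex _).obj (homComplex K (ModuleCat.of R R)) ≅
      (((tensorRight N).mapHomologicalComplex _).obj K).op :=
  HomologicalComplex.Hom.isoOfComponents
    (fun j => ((TensorProduct.congr (Module.evalEquiv R (K.X j)) (LinearEquiv.refl R N)).trans
      (dualTensorHomEquiv R (Module.Dual R (K.X j)) N)).toModuleIso.op)
    fun _ _ _ => Quiver.Hom.unop_inj <| ModuleCat.hom_ext <| TensorProduct.ext' fun _ _ =>
      LinearMap.ext fun _ => rfl

variable {M N : ModuleCat.{u} R}

lemma nonempty_homology_homComplex_iso_ext (P : ProjectiveResolution M)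
    (N : ModuleCat.{u} R) (i : ℕ) :
    Nonempty ((homComplex P.complex N).homology i ≅
      ((Ext R (ModuleCat.{u} R) i).obj (.op M)).obj N) := by
  let e := (NatIso.mapHomologicalComplex (homFunctorIso N) _).app P.complex
  exact ⟨HomologicalComplex.homologyUnop _ _ ≪≫
    (HomologicalComplex.homologyMapIso e i).unop ≪≫ (P.isoLeftDerivedObj _ i).unop⟩

lemma nonempty_ext_iso_extDelta (M N : ModuleCat.{u} R) (i : ℕ) :
    Nonempty (((Ext R (ModuleCat.{u} R) i).obj (.op M)).obj N ≅
      (((extDelta R N).T i).obj M).unop) := by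
  let P := projectiveResolution M
  obtain ⟨e⟩ := (extDelta R N).nonempty_homology_iso_of_projectiveResolution P i
  let e' := (NatIso.mapHomologicalComplex (extDeltaZeroIso R N) _).app P.complex
  exact ⟨(e.symm ≪≫ HomologicalComplex.homologyMapIso e' i ≪≫ (P.isoLeftDerivedObj _ i).symm).unop⟩

lemma nonempty_tor_iso_torDelta (Q : ProjectiveResolution N) (M : ModuleCat.{u} R) (i : ℕ) :
    Nonempty (((Tor (ModuleCat.{u} R) i).obj M).obj N ≅ ((torDelta Q).T i).obj M) :=
  ⟨Q.isoLeftDerivedObj ((tensoringLeft _).obj M) i⟩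

lemma nonempty_homology_tensorRight_iso_tor (P : ProjectiveResolution M)
    (N : ModuleCat.{u} R) (i : ℕ) :
    Nonempty ((((tensorRight N).mapHomologicalComplex _).obj P.complex).homology i ≅
      ((Tor (ModuleCat.{u} R) i).obj M).obj N) := by
  let Q := projectiveResolution N
  obtain ⟨e⟩ := (torDelta Q).nonempty_homology_iso_of_projectiveResolution P i
  obtain ⟨t⟩ := nonempty_tor_iso_torDelta Q M i
  let e' := (NatIso.mapHomologicalComplex (tensorComplexHomologyZeroIso Q) _).app P.complex
  exact ⟨(HomologicalComplex.homologyMapIso e' i).symm ≪≫ e ≪≫ t.symm⟩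

lemma moduleProjective_complex_X (P : ProjectiveResolution M) (j : ℕ) :
    Module.Projective R (P.complex.X j) :=
  (IsProjective.iff_projective _).mpr (P.projective j)

variable (P : ProjectiveResolution M) [∀ j, Module.Finite R (P.complex.X j)]

lemma nonempty_homology_torDelta_homComplex_iso_ext (Q : ProjectiveResolution N) (j : ℕ) :
    Nonempty (((((torDelta Q).T 0).mapHomologicalComplex _).obj
      (homComplex P.complex (ModuleCat.of R R))).homology j ≅
        ((Ext R (ModuleCat.{u} R) j).obj (.op M)).obj N) := by
  have := moduleProjective_complex_X P
  obtain ⟨e⟩ := nonempty_homology_homComplex_iso_ext P N j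
  exact ⟨HomologicalComplex.homologyMapIso
    ((NatIso.mapHomologicalComplex (tensorComplexHomologyZeroIso Q) _).app _ ≪≫
      homComplexTensorIso P.complex N) j ≪≫ e⟩

lemma nonempty_homology_extDelta_homComplex_iso_tor (N : ModuleCat.{u} R) (j : ℕ) :
    Nonempty (((((extDelta R N).T 0).mapHomologicalComplex _).obj
      (homComplex P.complex (ModuleCat.of R R))).homology j ≅
        .op (((Tor (ModuleCat.{u} R) j).obj M).obj N)) := by
  have := moduleProjective_complex_X P
  obtain ⟨e⟩ := nonempty_homology_tensorRight_iso_tor P N j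
  exact ⟨HomologicalComplex.homologyMapIso
    ((NatIso.mapHomologicalComplex (extDeltaZeroIso R N ≪≫ homFunctorIso N) _).app _ ≪≫
      homComplexHomIso P.complex N) j ≪≫ HomologicalComplex.homologyOp _ _ ≪≫ e.symm.op⟩

end Hom

section Vanishing

variable {R : Type u} [CommRing R]

lemma subsingleton_extM_iff {i : ℕ} {X N : ModuleCat.{u} R} :
    Subsingleton (extM R i X N) ↔ IsZero (((extDelta R N).T i).obj X) := by
  obtain ⟨e⟩ := nonempty_ext_iso_extDelta X N i
  rw [← ModuleCat.isZero_iff_subsingleton, e.isZero_iff]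
  exact ⟨fun h => h.op, fun h => h.unop⟩

lemma subsingleton_torM_iff {i : ℕ} {X N : ModuleCat.{u} R} (Q : ProjectiveResolution N) :
    Subsingleton (torM R i X N) ↔ IsZero (((torDelta Q).T i).obj X) := by
  obtain ⟨e⟩ := nonempty_tor_iso_torDelta Q X i
  rw [← ModuleCat.isZero_iff_subsingleton, e.isZero_iff]

lemma exactAt_homComplex_iff {M : ModuleCat.{u} R} (P : ProjectiveResolution M)
    (N : ModuleCat.{u} R) (i : ℕ) :
    (homComplex P.complex N).ExactAt i ↔ Subsingleton (extM R i M N) := by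
  obtain ⟨e⟩ := nonempty_homology_homComplex_iso_ext P N i
  rw [HomologicalComplex.exactAt_iff_isZero_homology, e.isZero_iff,
    ModuleCat.isZero_iff_subsingleton]

lemma exists_dimLE_torDelta {N : ModuleCat.{u} R} (hN : HasFiniteFlatDim R N)
    (Q : ProjectiveResolution N) : ∃ d, (torDelta Q).DimLE d :=
  hN.imp fun _ h i hi X => (subsingleton_torM_iff Q).mp (h i hi X)

lemma exists_dimLE_extDelta {N : ModuleCat.{u} R} (hN : HasFiniteInjDim R N) :
    ∃ d, (extDelta R N).DimLE d :=
  hN.imp fun _ h i hi X => subsingleton_extM_iff.mp (h i hi X)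

/-- `Extⁱ(X, R) = 0` for all `i > 0`. -/
abbrev IsDualAcyclic (X : ModuleCat.{u} R) : Prop :=
  (extDelta R (ModuleCat.of R R)).IsAcyclic X

lemma isDualAcyclic_iff {X : ModuleCat.{u} R} :
    IsDualAcyclic X ↔ ∀ i : ℕ, 0 < i → Subsingleton (extM R i X R) :=
  forall₂_congr fun _ _ => (subsingleton_extM_iff (N := ModuleCat.of R R)).symm

/-- The dual of a short complex of modules. -/
abbrev dualShortComplex (S : ShortComplex (ModuleCat.{u} R)) : ShortComplex (ModuleCat.{u} R) :=
  (S.map (homFunctor (ModuleCat.of R R))).unop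

lemma mono_extDelta_map_iff {N X Y : ModuleCat.{u} R} (f : X ⟶ Y) :
    Mono (((extDelta R N).T 0).map f) ↔ Function.Surjective (LinearMap.lcomp R N f.hom) := by
  have e := Arrow.isoOfNatIso (extDeltaZeroIso R N ≪≫ homFunctorIso N) (Arrow.mk f)
  refine ((MorphismProperty.monomorphisms _).arrow_mk_iso_iff e).trans ?_
  exact Iff.trans ⟨fun h => @unop_epi_of_mono _ _ _ _ _ h, fun h => @op_mono_of_epi _ _ _ _ _ h⟩
    (ModuleCat.epi_iff_surjective (ModuleCat.ofHom (LinearMap.lcomp R N f.hom)))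

lemma shortExact_dualShortComplex {S : ShortComplex (ModuleCat.{u} R)} (hS : S.ShortExact)
    (hX₃ : IsDualAcyclic S.X₃) : (dualShortComplex S).ShortExact :=
  ((ShortComplex.shortExact_iff_of_iso
    (S.mapNatIso (extDeltaZeroIso R _ ≪≫ homFunctorIso _))).mp
      (DeltaFunctor.shortExact_map hS hX₃)).unop

lemma nonempty_opcycles_homComplex_iso_dual {M : ModuleCat.{u} R} (P : ProjectiveResolution M)
    {k : ℕ} (hk : IsDualAcyclic (P.complex.opcycles k))
    (hk' : IsDualAcyclic (P.complex.opcycles (k + 1))) :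
    Nonempty ((homComplex P.complex (ModuleCat.of R R)).opcycles (k + 1) ≅
      ModuleCat.of R (Module.Dual R (P.complex.opcycles (k + 2)))) := by
  let S (j : ℕ) := ShortComplex.mk _ _ (fromOpcycles_comp_pOpcycles P.complex (j + 1) j)
  have hS (j : ℕ) : (S j).ShortExact := shortExact_opcycles P.complex rfl (P.complex_exactAt_succ j)
  have hS' := shortExact_dualShortComplex (hS (k + 1)) hk'
  have hg : Epi (dualShortComplex (S k)).g := (shortExact_dualShortComplex (hS k) hk).epi_g
  have hd : (homComplex P.complex (ModuleCat.of R R)).d k (k + 1) =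
      (dualShortComplex (S k)).g ≫ (dualShortComplex (S (k + 1))).f :=
    congrArg (fun f => ((homFunctor (ModuleCat.of R R)).map f).unop)
      (P.complex.p_fromOpcycles (k + 1) k).symm
  exact ⟨(HomologicalComplex.opcyclesIsCokernel _ k (k + 1) (by simp)).coconePointUniqueUpToIso
    (isCokernelEpiComp (hg := hg) hS'.gIsCokernel _ hd)⟩

end Vanishing

section Resolution

variable {R : Type u} [CommRing R]

section OfExact

variable {M : Type u} [AddCommGroup M] [Module R M] (P : ℕ → ModuleCat.{u} R)
  (d : ∀ j, P (j + 1) →ₗ[R] P j) (hd : ∀ j, LinearMap.range (d (j + 1)) = LinearMap.ker (d j))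

/-- The chain complex underlying an exact sequence `⋯ → P 1 → P 0` of modules. -/
def chainComplexOfExact : ChainComplex (ModuleCat.{u} R) ℕ :=
  ChainComplex.of P (fun j => ModuleCat.ofHom (d j)) fun j =>
    ModuleCat.hom_ext (LinearMap.range_le_ker_iff.mp (hd j).le)

lemma chainComplexOfExact_d (j : ℕ) :
    (chainComplexOfExact P d hd).d (j + 1) j = ModuleCat.ofHom (d j) := by
  simp only [chainComplexOfExact, ChainComplex.of_d]

lemma exactAt_chainComplexOfExact (j : ℕ) : (chainComplexOfExact P d hd).ExactAt (j + 1) := by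
  rw [HomologicalComplex.exactAt_iff' _ (j + 2) (j + 1) j (by simp) (by simp),
    ShortComplex.moduleCat_exact_iff_range_eq_ker]
  have h := hd j
  rwa [← ModuleCat.hom_ofHom (d j), ← ModuleCat.hom_ofHom (d (j + 1)),
    ← chainComplexOfExact_d P d hd, ← chainComplexOfExact_d P d hd] at h

variable {d} {ε : P 0 →ₗ[R] M}

lemma chainComplexOfExact_d_comp (hd₀ : LinearMap.range (d 0) = LinearMap.ker ε) :
    (chainComplexOfExact P d hd).d 1 0 ≫ ModuleCat.ofHom ε = 0 := by
  rw [chainComplexOfExact_d]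
  exact ModuleCat.hom_ext (LinearMap.range_le_ker_iff.mp hd₀.le)

/-- The projective resolution given by an exact sequence `⋯ → P 1 → P 0 → M → 0` of modules. -/
def projectiveResolutionOfExact (hP : ∀ j, Module.Projective R (P j))
    (hd₀ : LinearMap.range (d 0) = LinearMap.ker ε) (hε : Function.Surjective ε) :
    ProjectiveResolution (ModuleCat.of R M) where
  complex := chainComplexOfExact P d hd
  projective j := (IsProjective.iff_projective _).mp (hP j)
  π := (ChainComplex.toSingle₀Equiv _ _).symm
    ⟨ModuleCat.ofHom ε, chainComplexOfExact_d_comp P hd hd₀⟩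
  quasiIso := ⟨fun
    | 0 => by
      rw [ChainComplex.quasiIsoAt₀_iff, ShortComplex.quasiIso_iff_of_zeros' _
        ((chainComplexOfExact P d hd).shape 0 0 (by simp)) rfl rfl,
        ShortComplex.moduleCat_exact_iff_range_eq_ker, ModuleCat.epi_iff_surjective]
      have h := hd₀
      rw [← ModuleCat.hom_ofHom (d 0), ← chainComplexOfExact_d P d hd] at h
      exact ⟨h, hε⟩
    | j + 1 => (quasiIsoAt_iff_exactAt' _ _ (ChainComplex.exactAt_succ_single_obj _ _)).mpr
        (exactAt_chainComplexOfExact P d hd j)⟩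

end OfExact

variable [IsNoetherianRing R]

lemma exists_projectiveResolution_finite (M : ModuleCat.{u} R) [Module.Finite R M] :
    ∃ P : ProjectiveResolution M, ∀ j, Module.Finite R (P.complex.X j) := by
  choose n f hf using fun X : {X : ModuleCat.{u} R // Module.Finite R X} =>
    @Module.Finite.exists_fin' R X.1 _ _ _ X.2
  let K (j : ℕ) : {X : ModuleCat.{u} R // Module.Finite R X} :=
    Nat.rec ⟨M, inferInstance⟩ (fun _ X => ⟨ModuleCat.of R (LinearMap.ker (f X)),
      inferInstanceAs (Module.Finite R (LinearMap.ker (f X)))⟩) j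
  have hd (j : ℕ) : LinearMap.range ((LinearMap.ker (f (K j))).subtype ∘ₗ f (K (j + 1))) =
      LinearMap.ker (f (K j)) := by
    rw [LinearMap.range_comp_of_range_eq_top _ (LinearMap.range_eq_top.mpr (hf (K (j + 1))))]
    exact Submodule.range_subtype _
  have hd' (j : ℕ) := (hd (j + 1)).trans
    (LinearMap.ker_comp_of_ker_eq_bot (f (K (j + 1))) (LinearMap.ker (f (K j))).ker_subtype).symm
  exact ⟨projectiveResolutionOfExact (fun j => ModuleCat.of R (Fin (n (K j)) → R))
    (d := fun j => (LinearMap.ker (f (K j))).subtype ∘ₗ f (K (j + 1))) hd'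
    (fun j => inferInstanceAs (Module.Projective R (Fin (n (K j)) → R))) (hd 0) (hf (K 0)),
    fun j => (inferInstance : Module.Finite R (Fin (n (K j)) → R))⟩

end Resolution

section GDimensionZero

variable {R : Type u} [CommRing R] {X Y : Type u} [AddCommGroup X] [Module R X]
  [AddCommGroup Y] [Module R Y]

lemma isGDimZero_iff : IsGDimZero R X ↔ Module.Finite R X ∧ Module.IsReflexive R X ∧
    IsDualAcyclic (ModuleCat.of R X) ∧ IsDualAcyclic (ModuleCat.of R (Module.Dual R X)) := by
  rw [isDualAcyclic_iff, isDualAcyclic_iff]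
  exact and_congr_right' (and_congr_left'
    ⟨Module.IsReflexive.mk, fun _ => Module.bijective_dual_eval R X⟩)

lemma isDualAcyclic_of_projective [Module.Projective R X] : IsDualAcyclic (ModuleCat.of R X) :=
  have : Projective (ModuleCat.of R X) := (IsProjective.iff_projective X).mp inferInstance
  DeltaFunctor.isAcyclic_of_projective _

lemma isDualAcyclic_prod (hX : IsDualAcyclic (ModuleCat.of R X))
    (hY : IsDualAcyclic (ModuleCat.of R Y)) : IsDualAcyclic (ModuleCat.of R (X × Y)) := by
  let S : ShortComplex (ModuleCat.{u} R) :=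
    ShortComplex.mk (ModuleCat.ofHom (LinearMap.inl R X Y)) (ModuleCat.ofHom (LinearMap.snd R X Y))
      (ModuleCat.hom_ext (LinearMap.snd_comp_inl R X Y))
  have hS : S.ShortExact := ModuleCat.shortComplex_shortExact S Function.Exact.inl_snd
    LinearMap.inl_injective LinearMap.snd_surjective
  exact .of_shortExact₂ hS hX hY

lemma isGDimZero_of_projective [Module.Finite R X] [Module.Projective R X] : IsGDimZero R X :=
  isGDimZero_iff.mpr ⟨inferInstance, inferInstance, isDualAcyclic_of_projective,
    isDualAcyclic_of_projective⟩

lemma IsGDimZero.of_linearEquiv (hX : IsGDimZero R X) (e : X ≃ₗ[R] Y) : IsGDimZero R Y := by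
  obtain ⟨_, _, hext, hext'⟩ := isGDimZero_iff.mp hX
  exact isGDimZero_iff.mpr ⟨.equiv e, Module.equiv e, hext.of_iso e.symm.toModuleIso,
    hext'.of_iso e.dualMap.toModuleIso⟩

lemma IsGDimZero.prod (hX : IsGDimZero R X) (hY : IsGDimZero R Y) : IsGDimZero R (X × Y) := by
  obtain ⟨_, _, hX, hX'⟩ := isGDimZero_iff.mp hX
  obtain ⟨_, _, hY, hY'⟩ := isGDimZero_iff.mp hY
  exact isGDimZero_iff.mpr ⟨inferInstance, inferInstance, isDualAcyclic_prod hX hY,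
    (isDualAcyclic_prod hX' hY').of_iso (Module.dualProdDualEquivDual R X Y).symm.toModuleIso⟩

lemma isReflexive_of_exact {A : Type u} [AddCommGroup A] [Module R A] [Module.IsReflexive R X]
    {f : A →ₗ[R] X} {g : X →ₗ[R] Y} (hf : Function.Injective f) (hfg : Function.Exact f g)
    (hf' : Function.Surjective f.dualMap)
    (hY : Function.Injective (Module.Dual.eval R Y)) : Module.IsReflexive R A where
  bijective_dual_eval' := by
    have hX := Module.bijective_dual_eval R X
    refine ⟨.of_comp (f := f.dualMap.dualMap) (hX.injective.comp hf), fun ψ => ?_⟩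
    obtain ⟨x, hx⟩ := hX.surjective (f.dualMap.dualMap ψ)
    have hgf (φ : Module.Dual R Y) : f.dualMap (g.dualMap φ) = 0 :=
      LinearMap.ext fun a => by simp [hfg.apply_apply_eq_zero]
    have hgx : g x = 0 := hY <| LinearMap.ext fun φ => by
      calc φ (g x) = ψ (f.dualMap (g.dualMap φ)) := LinearMap.congr_fun hx (g.dualMap φ)
        _ = Module.Dual.eval R Y 0 φ := by simp [hgf]
    obtain ⟨a, rfl⟩ := (hfg x).mp hgx
    refine ⟨a, LinearMap.ext fun φ => ?_⟩
    obtain ⟨φ, rfl⟩ := hf' φ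
    exact LinearMap.congr_fun hx φ

lemma IsGDimZero.ker [IsNoetherianRing R] (hX : IsGDimZero R X) (hY : IsGDimZero R Y)
    {g : X →ₗ[R] Y} (hg : Function.Surjective g) : IsGDimZero R (LinearMap.ker g) := by
  obtain ⟨_, _, hX, hX'⟩ := isGDimZero_iff.mp hX
  obtain ⟨_, _, hY, hY'⟩ := isGDimZero_iff.mp hY
  have hS := LinearMap.shortExact_shortComplexKer hg
  have hS' := shortExact_dualShortComplex hS hY
  have hker : Module.IsReflexive R (LinearMap.ker g) :=
    isReflexive_of_exact (Submodule.injective_subtype _) (LinearMap.exact_subtype_ker_map g)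
      ((ModuleCat.epi_iff_surjective _).mp hS'.epi_g) (Module.bijective_dual_eval R Y).injective
  have hg'' : Function.Surjective g.dualMap.dualMap := by
    refine .of_comp (g := Module.Dual.eval R X) ?_
    exact (Module.bijective_dual_eval R Y).surjective.comp hg
  exact isGDimZero_iff.mpr ⟨inferInstance, hker, .of_shortExact₁ hS hX hY,
    .of_shortExact₃ hS' hY' hX' ((mono_extDelta_map_iff _).mpr hg'')⟩

end GDimensionZero

section GDimension

variable {R : Type u} [CommRing R]

lemma GDimLE.of_linearEquiv {n : ℕ} {X Y : ModuleCat.{u} R} (hX : GDimLE R n X) (e : X ≃ₗ[R] Y) :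
    GDimLE R n Y := by
  cases n with
  | zero => exact IsGDimZero.of_linearEquiv hX e
  | succ n =>
    obtain ⟨G, f, hG, hf, hker⟩ := hX
    refine ⟨G, e ∘ₗ f, hG, e.surjective.comp hf, ?_⟩
    rwa [LinearMap.ker_comp_of_ker_eq_bot _ e.ker]

lemma GDimLE.prod {n : ℕ} {X Y : ModuleCat.{u} R} (hX : GDimLE R n X) (hY : IsGDimZero R Y) :
    GDimLE R n (ModuleCat.of R (X × Y)) := by
  cases n with
  | zero => exact IsGDimZero.prod hX hY
  | succ n =>
    obtain ⟨G, f, hG, hf, hker⟩ := hX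
    refine ⟨ModuleCat.of R (G × Y), f.prodMap .id, hG.prod hY,
      hf.prodMap Function.surjective_id, hker.of_linearEquiv ?_⟩
    let φ : LinearMap.ker f →ₗ[R] LinearMap.ker (f.prodMap (.id : Y →ₗ[R] Y)) :=
      (LinearMap.inl R G Y).restrict fun x hx => by simpa using hx
    refine LinearEquiv.ofBijective φ ⟨fun x y h => ?_, ?_⟩
    · exact Subtype.ext (congrArg (fun z => z.1.1) h)
    · rintro ⟨⟨x, y⟩, h⟩
      obtain ⟨hx, rfl⟩ : f x = 0 ∧ y = 0 := Prod.mk.inj h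
      exact ⟨⟨x, hx⟩, rfl⟩

variable [IsNoetherianRing R]

lemma GDimLE.ker {n : ℕ} {X Y : ModuleCat.{u} R} (hX : GDimLE R n X) (hY : IsGDimZero R Y)
    {g : X →ₗ[R] Y} (hg : Function.Surjective g) :
    GDimLE R n (ModuleCat.of R (LinearMap.ker g)) := by
  cases n with
  | zero => exact IsGDimZero.ker hX hY hg
  | succ n =>
    obtain ⟨G, f, hG, hf, hker⟩ := hX
    let φ : LinearMap.ker (g ∘ₗ f) →ₗ[R] LinearMap.ker g := f.restrict fun _ hx => hx
    refine ⟨ModuleCat.of R (LinearMap.ker (g ∘ₗ f)), φ, hG.ker hY (hg.comp hf), ?_,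
      hker.of_linearEquiv ?_⟩
    · rintro ⟨x, hx⟩
      obtain ⟨y, rfl⟩ := hf x
      exact ⟨⟨y, hx⟩, rfl⟩
    · let ψ : LinearMap.ker f →ₗ[R] LinearMap.ker φ :=
        .codRestrict _ (Submodule.inclusion (LinearMap.ker_le_ker_comp f g))
          fun x => Subtype.ext x.2
      refine LinearEquiv.ofBijective ψ ⟨fun x y h => ?_, ?_⟩
      · exact Subtype.ext (congrArg (fun z => z.1.1) h)
      · rintro ⟨⟨x, hx⟩, h⟩
        exact ⟨⟨x, congrArg Subtype.val h⟩, rfl⟩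

lemma GDimLE.ker_of_projective {n : ℕ} {X F : ModuleCat.{u} R} [Module.Finite R F]
    [Module.Projective R F] (hX : GDimLE R (n + 1) X) {p : F →ₗ[R] X}
    (hp : Function.Surjective p) : GDimLE R n (ModuleCat.of R (LinearMap.ker p)) := by
  obtain ⟨G, f, hG, hf, hker⟩ := hX
  obtain ⟨s, hs⟩ := Module.projective_lifting_property f p hf
  have hs' (y : F) : f (s y) = p y := LinearMap.congr_fun hs y
  let φ : LinearMap.ker f × F →ₗ[R] G := (LinearMap.ker f).subtype.coprod s
  have hφ : Function.Surjective φ := fun x => by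
    obtain ⟨y, hy⟩ := hp (f x)
    exact ⟨(⟨x - s y, by simp [hs', hy]⟩, y), sub_add_cancel x (s y)⟩
  refine ((hker.prod isGDimZero_of_projective).ker hG hφ).of_linearEquiv ?_
  have hfφ (z : LinearMap.ker f × F) : f (φ z) = p z.2 := by simp [φ, hs']
  let ψ : LinearMap.ker φ →ₗ[R] LinearMap.ker p :=
    (LinearMap.snd R _ F).restrict fun z hz => (hfφ z).symm.trans (by rw [hz, map_zero])
  refine LinearEquiv.ofBijective ψ ⟨(injective_iff_map_eq_zero ψ).mpr ?_, ?_⟩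
  · rintro ⟨⟨⟨x, hx⟩, y⟩, h⟩ hy
    obtain rfl : y = 0 := congrArg Subtype.val hy
    obtain rfl : x = 0 := by simpa [φ] using h
    rfl
  · rintro ⟨y, hy⟩
    exact ⟨⟨(⟨-s y, by simpa [hs'] using hy⟩, y), neg_add_cancel (s y)⟩, rfl⟩

lemma GDimLE.of_shortExact {n : ℕ} {S : ShortComplex (ModuleCat.{u} R)} (hS : S.ShortExact)
    [Module.Finite R S.X₂] [Module.Projective R S.X₂] (h : GDimLE R n S.X₃) :
    GDimLE R (n - 1) S.X₁ := by
  have hg : Function.Surjective S.g.hom := (ModuleCat.epi_iff_surjective _).mp hS.epi_g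
  let e := (ModuleCat.kernelIsLimit S.g).conePointUniqueUpToIso hS.fIsKernel
  refine GDimLE.of_linearEquiv ?_ e.toLinearEquiv
  cases n with
  | zero => exact IsGDimZero.ker isGDimZero_of_projective h hg
  | succ n => exact GDimLE.ker_of_projective h hg

variable {M : ModuleCat.{u} R}

lemma GDimLE.opcycles {n : ℕ} (hM : GDimLE R n M) (P : ProjectiveResolution M)
    [∀ j, Module.Finite R (P.complex.X j)] (k : ℕ) :
    GDimLE R (n - k) (P.complex.opcycles k) := by
  have := moduleProjective_complex_X P
  induction k with
  | zero => exact hM.of_linearEquiv (P.isColimitCokernelCofork.coconePointUniqueUpToIso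
      (P.complex.opcyclesIsCokernel 1 0 (by simp))).toLinearEquiv
  | succ k ih =>
    exact .of_shortExact (shortExact_opcycles P.complex (i := k + 1) (j := k) rfl
      (P.complex_exactAt_succ k)) ih

lemma GDimLE.isGDimZero_opcycles {n k : ℕ} (hM : GDimLE R n M) (P : ProjectiveResolution M)
    [∀ j, Module.Finite R (P.complex.X j)] (hk : n ≤ k) :
    IsGDimZero R (P.complex.opcycles k) := by
  have h := hM.opcycles P k
  rwa [Nat.sub_eq_zero_of_le hk] at h

lemma GDimLE.subsingleton_extM {n i : ℕ} (hM : GDimLE R n M) (P : ProjectiveResolution M)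
    [∀ j, Module.Finite R (P.complex.X j)] (hi : n < i) :
    Subsingleton (extM R i M R) := by
  obtain ⟨-, -, h, -⟩ := isGDimZero_iff.mp (hM.isGDimZero_opcycles P le_rfl)
  obtain ⟨e⟩ := DeltaFunctor.nonempty_iso_opcycles_of_projectiveResolution
    (Δ := extDelta R (ModuleCat.of R R)) P (Nat.sub_pos_of_lt hi) n (m := i) (by lia)
  exact (subsingleton_extM_iff (N := ModuleCat.of R R)).mpr ((h (Nat.sub_pos_of_lt hi)).of_iso e)

lemma GDimLE.isDualAcyclic_opcycles_homComplex {n : ℕ} (hM : GDimLE R n M)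
    (P : ProjectiveResolution M) [∀ j, Module.Finite R (P.complex.X j)] :
    IsDualAcyclic ((homComplex P.complex (ModuleCat.of R R)).opcycles (n + 1)) := by
  have h {k : ℕ} (hk : n ≤ k) := isGDimZero_iff.mp (hM.isGDimZero_opcycles P hk)
  obtain ⟨e⟩ := nonempty_opcycles_homComplex_iso_dual P (h le_rfl).2.2.1 (h n.le_succ).2.2.1
  exact (h (k := n + 2) (by lia)).2.2.2.of_iso e

end GDimension

section Acyclicity

variable {R : Type u} [CommRing R]

lemma isAcyclic_homComplex_X {A : Type w'} [Category.{v'} A] [Abelian A]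
    (Δ : DeltaFunctor (ModuleCat.{u} R) A) {M : ModuleCat.{u} R} (P : ProjectiveResolution M)
    [∀ j, Module.Finite R (P.complex.X j)] (j : ℕ) :
    Δ.IsAcyclic ((homComplex P.complex (ModuleCat.of R R)).X j) :=
  have := moduleProjective_complex_X P j
  have : Projective ((homComplex P.complex (ModuleCat.of R R)).X j) :=
    (IsProjective.iff_projective (Module.Dual R (P.complex.X j))).mp inferInstance
  DeltaFunctor.isAcyclic_of_projective _

lemma IsDualAcyclic.exactAt_homComplex {X : ModuleCat.{u} R} (hX : IsDualAcyclic X)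
    (P : ProjectiveResolution X) {l : ℕ} (hl : 0 < l) :
    (homComplex P.complex (ModuleCat.of R R)).ExactAt l :=
  (exactAt_homComplex_iff P _ l).mpr (isDualAcyclic_iff.mp hX l hl)

variable [IsNoetherianRing R] {X N : ModuleCat.{u} R} [Module.Finite R X]

lemma IsDualAcyclic.isAcyclic_extDelta (hX : IsDualAcyclic X) (hN : HasFiniteFlatDim R N) :
    (extDelta R N).IsAcyclic X := fun i hi => by
  obtain ⟨P, _⟩ := exists_projectiveResolution_finite X
  let Q := projectiveResolution N
  obtain ⟨d, hd⟩ := exists_dimLE_torDelta hN Q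
  obtain ⟨e⟩ := nonempty_homology_torDelta_homComplex_iso_ext P Q i
  have h := hd.isZero_homology_map (isAcyclic_homComplex_X _ P)
    fun l hl => hX.exactAt_homComplex P (hi.trans_le hl)
  exact subsingleton_extM_iff.mp (ModuleCat.isZero_iff_subsingleton.mp (h.of_iso e.symm))

lemma IsDualAcyclic.isAcyclic_torDelta (hX : IsDualAcyclic X) (hN : HasFiniteInjDim R N)
    (Q : ProjectiveResolution N) : (torDelta Q).IsAcyclic X := fun i hi => by
  obtain ⟨P, _⟩ := exists_projectiveResolution_finite X
  obtain ⟨d, hd⟩ := exists_dimLE_extDelta hN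
  obtain ⟨e⟩ := nonempty_homology_extDelta_homComplex_iso_tor P N i
  have h := hd.isZero_homology_map (isAcyclic_homComplex_X _ P)
    fun l hl => hX.exactAt_homComplex P (hi.trans_le hl)
  exact (subsingleton_torM_iff Q).mp (ModuleCat.isZero_iff_subsingleton.mp (h.of_iso e.symm).unop)

lemma GDimLE.isAcyclic_opcycles_homComplex {M : ModuleCat.{u} R} {n : ℕ} (hM : GDimLE R n M)
    (P : ProjectiveResolution M) [∀ j, Module.Finite R (P.complex.X j)]
    (hN : HasFiniteFlatDim R N ∨ HasFiniteInjDim R N) (Q : ProjectiveResolution N) :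
    (torDelta Q).IsAcyclic ((homComplex P.complex (ModuleCat.of R R)).opcycles (n + 1)) ∧
      (extDelta R N).IsAcyclic ((homComplex P.complex (ModuleCat.of R R)).opcycles (n + 1)) := by
  have hex (l : ℕ) (hl : n + 1 ≤ l) : (homComplex P.complex (ModuleCat.of R R)).ExactAt l :=
    (exactAt_homComplex_iff P _ l).mpr (hM.subsingleton_extM P hl)
  have hW := hM.isDualAcyclic_opcycles_homComplex P
  have : Module.Finite R ((homComplex P.complex (ModuleCat.of R R)).opcycles (n + 1)) := by
    have := moduleProjective_complex_X P (n + 1)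
    have : Module.Finite R ((homComplex P.complex (ModuleCat.of R R)).X (n + 1)) :=
      (inferInstance : Module.Finite R (Module.Dual R (P.complex.X (n + 1))))
    exact .of_surjective _ ((ModuleCat.epi_iff_surjective
      ((homComplex P.complex (ModuleCat.of R R)).pOpcycles (n + 1))).mp inferInstance)
  rcases hN with hN | hN
  · obtain ⟨d, hd⟩ := exists_dimLE_torDelta hN Q
    exact ⟨hd.isAcyclic_opcycles (isAcyclic_homComplex_X _ P) hex, hW.isAcyclic_extDelta hN⟩
  · obtain ⟨d, hd⟩ := exists_dimLE_extDelta hN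
    exact ⟨hW.isAcyclic_torDelta hN Q, hd.isAcyclic_opcycles (isAcyclic_homComplex_X _ P) hex⟩

end Acyclicity

section Duality

lemma of_sInf_natCast_eq {p : ℕ → Prop} {n : ℕ} (h : sInf {m : ℕ∞ | ∃ k : ℕ, m = k ∧ p k} = n) :
    p n := by
  obtain ⟨k, hk, hp⟩ := csInf_mem (s := {m : ℕ∞ | ∃ k : ℕ, m = k ∧ p k}) <|
    Set.nonempty_iff_ne_empty.mpr fun hempty =>
      ENat.top_ne_natCast n (by rw [← h, hempty, sInf_empty])
  rwa [Nat.cast_injective (h.symm.trans hk)]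

variable {R : Type u} [CommRing R]

lemma GDimLE.of_gdim_eq {M : Type u} [AddCommGroup M] [Module R M] {n : ℕ}
    (h : GDim R M = n) : GDimLE R n (ModuleCat.of R M) :=
  of_sInf_natCast_eq h

lemma pos_of_rgr_eq {M : Type u} [AddCommGroup M] [Module R M] {n : ℕ} (h : rgr R M = n) :
    0 < n :=
  (of_sInf_natCast_eq h).1

lemma subsingleton_extM_of_lt_rgr {M : Type u} [AddCommGroup M] [Module R M] {j : ℕ} (hj : 0 < j)
    (h : j < rgr R M) : Subsingleton (extM R j M R) :=
  of_not_not fun hext => h.not_ge (sInf_le ⟨j, rfl, hj, hext⟩)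

lemma nonempty_boundaries_iso_range {ι : Type*} {c : ComplexShape ι}
    (K : HomologicalComplex (ModuleCat.{u} R) c) {i j : ι} (hij : c.Rel i j) :
    Nonempty (boundaries K j ≅ ModuleCat.of R (LinearMap.range (K.d i j).hom)) :=
  ⟨ModuleCat.kernelIsoKer _ ≪≫
    (LinearEquiv.ofEq _ _ (exact_d_pOpcycles K hij).moduleCat_range_eq_ker.symm).toModuleIso⟩

section Shift

variable {A : Type w'} [Category.{v'} A] [Abelian A] {Δ : DeltaFunctor (ModuleCat.{u} R) A}
  {M : ModuleCat.{u} R} (P : ProjectiveResolution M) [∀ j, Module.Finite R (P.complex.X j)]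
  {n i : ℕ}

lemma nonempty_map_extM_iso_homology_map
    (hW : Δ.IsAcyclic ((homComplex P.complex (ModuleCat.of R R)).opcycles (n + 1)))
    (hred : ∀ j, 0 < j → j < n → Subsingleton (extM R j M R)) (hi : i < n) :
    Nonempty ((Δ.T i).obj (ModuleCat.of R (extM R n M R)) ≅
      (((Δ.T 0).mapHomologicalComplex _).obj
        (homComplex P.complex (ModuleCat.of R R))).homology (n - i)) := by
  obtain ⟨e⟩ := nonempty_homology_homComplex_iso_ext P (ModuleCat.of R R) n
  obtain ⟨f⟩ := DeltaFunctor.nonempty_homology_iso_homology_map (isAcyclic_homComplex_X Δ P) hW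
    (fun l hl hln => (exactAt_homComplex_iff P _ l).mpr (hred l hl hln))
    (Nat.sub_pos_of_lt hi) (Nat.add_sub_of_le hi.le)
  exact ⟨(Δ.T i).mapIso e.symm ≪≫ f⟩

lemma nonempty_map_extM_iso_map_range
    (hW : Δ.IsAcyclic ((homComplex P.complex (ModuleCat.of R R)).opcycles (n + 1)))
    (hred : ∀ j, 0 < j → j < n → Subsingleton (extM R j M R)) (hn : 0 < n) (hi : n < i) :
    Nonempty ((Δ.T i).obj (ModuleCat.of R (extM R n M R)) ≅
      (Δ.T (i - n)).obj (ModuleCat.of R (LinearMap.range (P.complex.d 1 0).hom.dualMap))) := by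
  obtain ⟨e⟩ := nonempty_homology_homComplex_iso_ext P (ModuleCat.of R R) n
  obtain ⟨f⟩ := DeltaFunctor.nonempty_homology_iso_boundaries (isAcyclic_homComplex_X Δ P) hW
    (fun l hl hln => (exactAt_homComplex_iff P _ l).mpr (hred l hl hln)) hn
    (Nat.sub_pos_of_lt hi) (Nat.sub_add_cancel hi.le).symm
  obtain ⟨g⟩ := nonempty_boundaries_iso_range (homComplex P.complex (ModuleCat.of R R))
    (i := 0) (j := 1) rfl
  exact ⟨(Δ.T i).mapIso e.symm ≪≫ f ≪≫ (Δ.T (i - n)).mapIso g⟩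

end Shift

variable [IsNoetherianRing R]

theorem stmt13_general {M N : ModuleCat.{u} R} (P : ProjectiveResolution M)
    [∀ j, Module.Finite R (P.complex.X j)] {n : ℕ} (hn : 0 < n) (hG : GDimLE R n M)
    (hred : ∀ j, 0 < j → j < n → Subsingleton (extM R j M R))
    (hN : HasFiniteFlatDim R N ∨ HasFiniteInjDim R N) :
    (∀ i : ℕ, i < n →
      Nonempty (torM R i (extM R n M R) N ≃ₗ[R] extM R (n - i) M N)) ∧
    (∀ i : ℕ, n < i →
      Nonempty (torM R i (extM R n M R) N ≃ₗ[R]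
        torM R (i - n) (LinearMap.range (P.complex.d 1 0).hom.dualMap) N)) ∧
    (∀ i : ℕ, i < n →
      Nonempty (extM R i (extM R n M R) N ≃ₗ[R] torM R (n - i) M N)) ∧
    (∀ i : ℕ, n < i →
      Nonempty (extM R i (extM R n M R) N ≃ₗ[R]
        extM R (i - n) (LinearMap.range (P.complex.d 1 0).hom.dualMap) N)) := by
  let Q := projectiveResolution N
  obtain ⟨htor, hext⟩ := hG.isAcyclic_opcycles_homComplex P hN Q
  refine ⟨fun i hi => ?_, fun i hi => ?_, fun i hi => ?_, fun i hi => ?_⟩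
  · obtain ⟨e⟩ := nonempty_tor_iso_torDelta Q (ModuleCat.of R (extM R n M R)) i
    obtain ⟨f⟩ := nonempty_map_extM_iso_homology_map P htor hred hi
    obtain ⟨g⟩ := nonempty_homology_torDelta_homComplex_iso_ext P Q (n - i)
    exact ⟨(e ≪≫ f ≪≫ g).toLinearEquiv⟩
  · obtain ⟨e⟩ := nonempty_tor_iso_torDelta Q (ModuleCat.of R (extM R n M R)) i
    obtain ⟨f⟩ := nonempty_map_extM_iso_map_range P htor hred hn hi
    obtain ⟨g⟩ := nonempty_tor_iso_torDelta Q _ (i - n)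
    exact ⟨(e ≪≫ f ≪≫ g.symm).toLinearEquiv⟩
  · obtain ⟨e⟩ := nonempty_ext_iso_extDelta (ModuleCat.of R (extM R n M R)) N i
    obtain ⟨f⟩ := nonempty_map_extM_iso_homology_map P hext hred hi
    obtain ⟨g⟩ := nonempty_homology_extDelta_homComplex_iso_tor P N (n - i)
    exact ⟨(e ≪≫ (f ≪≫ g).unop.symm).toLinearEquiv⟩
  · obtain ⟨e⟩ := nonempty_ext_iso_extDelta (ModuleCat.of R (extM R n M R)) N i
    obtain ⟨f⟩ := nonempty_map_extM_iso_map_range P hext hred hn hi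
    obtain ⟨g⟩ := nonempty_ext_iso_extDelta _ N (i - n)
    exact ⟨(e ≪≫ f.unop.symm ≪≫ g.symm).toLinearEquiv⟩

end Duality

end

section Statements

variable (R : Type u) [CommRing R] [IsNoetherianRing R]

theorem stmt13 (M : Type u) [AddCommGroup M] [Module R M] [Module.Finite R M]
    (F : MinRes R M) (n : ℕ) (hG : GDim R M = (n : ℕ∞)) (hred : rgr R M = (n : ℕ∞))
    (N : Type u) [AddCommGroup N] [Module R N] [Module.Finite R N]
    (hN : HasFiniteFlatDim R N ∨ HasFiniteInjDim R N) :
    (∀ i : ℕ, i < n →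
      Nonempty (torM R i (extM R n M R) N ≃ₗ[R] extM R (n - i) M N)) ∧
    (∀ i : ℕ, n < i →
      Nonempty (torM R i (extM R n M R) N ≃ₗ[R] torM R (i - n) F.lambdaMod N)) ∧
    (∀ i : ℕ, i < n →
      Nonempty (extM R i (extM R n M R) N ≃ₗ[R] torM R (n - i) M N)) ∧
    (∀ i : ℕ, n < i →
      Nonempty (extM R i (extM R n M R) N ≃ₗ[R] extM R (i - n) F.lambdaMod N)) := by
  let P := projectiveResolutionOfExact F.P F.exact F.projective F.exact0 F.surj
  have (j : ℕ) : Module.Finite R (P.complex.X j) := F.finite j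
  have h := stmt13_general (N := ModuleCat.of R N) P (pos_of_rgr_eq hred) (.of_gdim_eq hG)
    (fun j hj hjn => subsingleton_extM_of_lt_rgr hj (hred ▸ Nat.cast_lt.mpr hjn)) hN
  have hd : (P.complex.d 1 0).hom = F.d 0 :=
    congrArg ModuleCat.Hom.hom (chainComplexOfExact_d F.P F.d F.exact 0)
  rwa [hd] at h

end Statements
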